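/- arXiv:2603.18413 — 3 statements merged into one kernel-verified Lean document; each statement's English description precedes it below -/
import Mathlib

section
/- Let N ∈ ℕ, Σ ∈ ℝ^{N×N}, and η ∈ ℝ^N with η^⊤Ση ≠ 0. Let S be any type and f : ℝ^N → S any function (representing the pipeline output map). For a fixed x ∈ ℝ^N, set a = Q(x) and b = Ση/(η^⊤Ση). Then {X ∈ ℝ^N : f(X) = f(x) and Q(X) = Q(x)} = {a + z·b : z ∈ ℝ, f(a + z·b) = f(x)}. In particular, the data space conditional on both the pipeline output and the nuisance statistic is the one-dimensional set {a + z·b : z ∈ 𝒵} with 𝒵 = {z ∈ ℝ : f(a + z·b) = f(x)}. -/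
/-!
Write `Q` for the nuisance map and `b` for the direction vector. Every vector decomposes as
`X = Q X + (η ⬝ᵥ X) • b`, and `η ⬝ᵥ Q X = 0`, `η ⬝ᵥ b = 1`. Hence a vector `Q x + z • b` has
`η`-coordinate `z`, and subtracting `z • b` from it shows that its nuisance part is `Q x`. So the
fibre of `Q` through `x` is exactly the line `Q x + ℝ b`, and the condition `f X = f x` is carried
along unchanged by this parametrization.
-/

open Matrix

/-- The nuisance map `Q(x) = x − ((η^⊤x)/(η^⊤Ση))·Ση`. -/
noncomputable def nuisance {N : ℕ} (Smat : Matrix (Fin N) (Fin N) ℝ) (η : Fin N → ℝ)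
    (x : Fin N → ℝ) : Fin N → ℝ :=
  x - ((η ⬝ᵥ x) / (η ⬝ᵥ Smat.mulVec η)) • Smat.mulVec η

/-- The direction vector `b = Ση/(η^⊤Ση)`. -/
noncomputable def bvec {N : ℕ} (Smat : Matrix (Fin N) (Fin N) ℝ) (η : Fin N → ℝ) :
    Fin N → ℝ :=
  (η ⬝ᵥ Smat.mulVec η)⁻¹ • Smat.mulVec η

lemma nuisance_eq_sub {N : ℕ} (Smat : Matrix (Fin N) (Fin N) ℝ) (η x : Fin N → ℝ) :
    nuisance Smat η x = x - (η ⬝ᵥ x) • bvec Smat η := by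
  simp only [nuisance, bvec, smul_smul, div_eq_mul_inv]

lemma dotProduct_bvec {N : ℕ} (Smat : Matrix (Fin N) (Fin N) ℝ) (η : Fin N → ℝ)
    (hη : η ⬝ᵥ Smat.mulVec η ≠ 0) : η ⬝ᵥ bvec Smat η = 1 := by
  rw [bvec, dotProduct_smul, smul_eq_mul, inv_mul_cancel₀ hη]

/-- The nuisance map is constant along `b` and idempotent. -/
lemma nuisance_nuisance_add_smul {N : ℕ} (Smat : Matrix (Fin N) (Fin N) ℝ) (η : Fin N → ℝ)
    (hη : η ⬝ᵥ Smat.mulVec η ≠ 0) (x : Fin N → ℝ) (z : ℝ) :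
    nuisance Smat η (nuisance Smat η x + z • bvec Smat η) = nuisance Smat η x := by
  have h : η ⬝ᵥ (nuisance Smat η x + z • bvec Smat η) = z := by
    simp [nuisance_eq_sub, dotProduct_add, dotProduct_sub, dotProduct_smul,
      dotProduct_bvec Smat η hη]
  rw [nuisance_eq_sub Smat η (_ + _), h, add_sub_cancel_right]

theorem stmt_3 (N : ℕ) (Smat : Matrix (Fin N) (Fin N) ℝ) (η : Fin N → ℝ)
    (hη : η ⬝ᵥ Smat.mulVec η ≠ 0) {Out : Type*} (f : (Fin N → ℝ) → Out)
    (x : Fin N → ℝ) :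
    {X : Fin N → ℝ | f X = f x ∧ nuisance Smat η X = nuisance Smat η x}
      = (fun z : ℝ => nuisance Smat η x + z • bvec Smat η) ''
          {z : ℝ | f (nuisance Smat η x + z • bvec Smat η) = f x} := by
  ext X
  constructor
  · rintro ⟨hf, hQ⟩
    have hX : nuisance Smat η x + (η ⬝ᵥ X) • bvec Smat η = X := by
      rw [← hQ, nuisance_eq_sub, sub_add_cancel]
    exact ⟨η ⬝ᵥ X, by rw [Set.mem_ofPred_eq, hX, hf], hX⟩
  · rintro ⟨z, hz, rfl⟩
    exact ⟨hz, nuisance_nuisance_add_smul Smat η hη x z⟩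
end

section
/- Let (Ω, 𝔽, P) be a probability space, let E ∈ 𝔽 with P(E) > 0, and let T : Ω → ℝ be a random variable. Let μ be the Gaussian measure N(m, v) on ℝ with v > 0, let S ⊆ ℝ be measurable with μ(S) > 0, and suppose that the conditional law of T given E equals the truncated normal measure μ(· | S), i.e. the pushforward of P(· | E) under T equals μ(· | S). Define F(t) = μ(S ∩ (−∞, t])/μ(S), the pivot π(ω) = F(T(ω)), and the selective p-value p(ω) = 2·min(π(ω), 1 − π(ω)). Then for every α ∈ (0, 1), P(p ≤ α | E) = α. -/
/-!
The truncated normal law `ν` is a probability measure without atoms, and `F` is its cdf. Hence `F`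
is continuous, takes every value in `(0, 1)`, and the probability integral transform gives
`ν {F ≤ u} = u = ν {F < u}` for all `u ∈ (0, 1)`. For `α ∈ (0, 1)`, the event `p ≤ α` is the
disjoint union of `F ≤ α / 2` and `1 - α / 2 ≤ F`, each of `ν`-mass `α / 2`.
-/

open MeasureTheory ProbabilityTheory NNReal

theorem continuous_cdf_of_nullSingletonClass (ν : Measure ℝ) [IsProbabilityMeasure ν] [NullSingletonClass ν] :
    Continuous (cdf ν) := by
  refine continuous_iff_continuousAt.2 fun x => ?_
  rw [(monotone_cdf ν).continuousAt_iff_leftLim_eq_rightLim, StieltjesFunction.rightLim_eq]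
  refine le_antisymm ((monotone_cdf ν).leftLim_le le_rfl) ?_
  have h := (cdf ν).measure_singleton x
  rw [measure_cdf, measure_singleton] at h
  linarith [ENNReal.ofReal_eq_zero.1 h.symm]

theorem exists_cdf_eq (ν : Measure ℝ) [IsProbabilityMeasure ν] [NullSingletonClass ν]
    {u : ℝ} (hu : u ∈ Set.Ioo (0 : ℝ) 1) : ∃ x, cdf ν x = u :=
  mem_range_of_exists_le_of_exists_ge (continuous_cdf_of_nullSingletonClass ν)
    ((tendsto_cdf_atBot ν).eventually_le_const hu.1).exists
    ((tendsto_cdf_atTop ν).eventually_const_le hu.2).exists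

/-- Probability integral transform, for the non-strict sublevel sets of the cdf. -/
theorem measureReal_cdf_le (ν : Measure ℝ) [IsProbabilityMeasure ν] [NullSingletonClass ν]
    {u : ℝ} (hu : u ∈ Set.Ioo (0 : ℝ) 1) : ν.real {x | cdf ν x ≤ u} = u := by
  apply le_antisymm
  -- The sublevel set may extend past a point where `cdf = u`, so it is bounded by rays at levels
  -- `w > u`.
  · refine le_of_forall_gt_imp_ge_of_dense fun w hw => ?_
    rcases lt_or_ge w 1 with hw1 | hw1
    · obtain ⟨y, hy⟩ := exists_cdf_eq ν (u := w) ⟨hu.1.trans hw, hw1⟩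
      calc ν.real {x | cdf ν x ≤ u} ≤ ν.real (Set.Iic y) := by
            refine measureReal_mono fun x (hx : cdf ν x ≤ u) => ?_
            by_contra hxy
            have := monotone_cdf ν (not_le.1 hxy).le
            linarith
        _ = w := by rw [← cdf_eq_real, hy]
    · exact measureReal_le_one.trans hw1
  · obtain ⟨y, hy⟩ := exists_cdf_eq ν hu
    calc u = ν.real (Set.Iic y) := by rw [← cdf_eq_real, hy]
      _ ≤ _ := measureReal_mono fun x hx => (monotone_cdf ν hx).trans hy.le

/-- Probability integral transform, for the strict sublevel sets of the cdf. -/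
theorem measureReal_cdf_lt (ν : Measure ℝ) [IsProbabilityMeasure ν] [NullSingletonClass ν]
    {u : ℝ} (hu : u ∈ Set.Ioo (0 : ℝ) 1) : ν.real {x | cdf ν x < u} = u := by
  apply le_antisymm
  · calc ν.real {x | cdf ν x < u} ≤ ν.real {x | cdf ν x ≤ u} :=
          measureReal_mono fun x (hx : cdf ν x < u) => hx.le
      _ = u := measureReal_cdf_le ν hu
  · refine le_of_forall_lt_imp_le_of_dense fun w hw => ?_
    rcases lt_or_ge 0 w with hw0 | hw0
    · calc w = ν.real {x | cdf ν x ≤ w} := (measureReal_cdf_le ν ⟨hw0, hw.trans hu.2⟩).symm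
        _ ≤ _ := measureReal_mono fun x (hx : cdf ν x ≤ w) => hx.trans_lt hw
    · exact hw0.trans measureReal_nonneg

theorem stmt_9 {Ω : Type*} [MeasurableSpace Ω] (P : Measure Ω) [IsProbabilityMeasure P]
    (E : Set Ω) (hE : MeasurableSet E) (hEpos : 0 < P E)
    (T : Ω → ℝ) (hT : Measurable T)
    (m : ℝ) (v : ℝ≥0) (hv : 0 < v)
    (S : Set ℝ) (hS : MeasurableSet S) (hSpos : 0 < gaussianReal m v S)
    (hlaw : Measure.map T (P[|E]) = (gaussianReal m v)[|S])
    (F : ℝ → ℝ)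
    (hF : ∀ t : ℝ, F t = ((gaussianReal m v) (S ∩ Set.Iic t)).toReal
      / ((gaussianReal m v) S).toReal)
    (p : Ω → ℝ) (hp : ∀ ω : Ω, p ω = 2 * min (F (T ω)) (1 - F (T ω))) :
    ∀ α ∈ Set.Ioo (0 : ℝ) 1, (P[|E]) {ω : Ω | p ω ≤ α} = ENNReal.ofReal α := by
  intro α hα
  obtain ⟨h0, h1⟩ := hα
  set ν := (gaussianReal m v)[|S] with hν
  have : IsProbabilityMeasure ν := cond_isProbabilityMeasure hSpos.ne'
  have : NullSingletonClass (gaussianReal m v) := nullSingletonClass_gaussianReal hv.ne'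
  have : NullSingletonClass ν := ⟨fun x => cond_absolutelyContinuous (measure_singleton x)⟩
  have hFc : F = cdf ν := by
    funext t
    rw [hF, cdf_eq_real, measureReal_def, hν, cond_apply hS, ENNReal.toReal_mul,
      ENNReal.toReal_inv, div_eq_inv_mul]
  have hmeas : Measurable (cdf ν) := (monotone_cdf ν).measurable
  have hA : MeasurableSet {x | cdf ν x ≤ α / 2} := measurableSet_le hmeas measurable_const
  have hB : MeasurableSet {x | cdf ν x < 1 - α / 2} := measurableSet_lt hmeas measurable_const
  have hset : {ω : Ω | p ω ≤ α} =
      T ⁻¹' ({x | cdf ν x ≤ α / 2} ∪ {x | cdf ν x < 1 - α / 2}ᶜ) := by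
    ext ω
    have h2 : p ω ≤ α ↔ min (cdf ν (T ω)) (1 - cdf ν (T ω)) ≤ α / 2 := by
      rw [hp, hFc]
      constructor <;> intro h <;> linarith
    simp only [Set.mem_ofPred_eq, Set.mem_preimage, Set.mem_union, Set.mem_compl_iff, not_lt, h2,
      min_le_iff, sub_le_comm]
  have hdisj : Disjoint {x | cdf ν x ≤ α / 2} {x | cdf ν x < 1 - α / 2}ᶜ := by
    rw [Set.disjoint_compl_right_iff_subset]
    intro x (hx : cdf ν x ≤ α / 2)
    change cdf ν x < 1 - α / 2
    linarith
  rw [hset, ← Measure.map_apply hT (hA.union hB.compl), hlaw, ← ofReal_measureReal,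
    measureReal_union hdisj hB.compl, probReal_compl_eq_one_sub hB,
    measureReal_cdf_le ν ⟨by linarith, by linarith⟩,
    measureReal_cdf_lt ν ⟨by linarith, by linarith⟩]
  congr 1
  ring
end

section
/- Let S be a type equipped with functions l, u : S → ℝ (the current interval bounds of a pipeline state), and let g₁, …, g_m : ℝ × S → S be a finite sequence of node update rules such that each gᵢ satisfies, for every state s ∈ S and every z ∈ ℝ: (i) shrinking: [l(gᵢ(z, s)), u(gᵢ(z, s))] ⊆ [l(s), u(s)], and (ii) local invariance: for every r ∈ [l(gᵢ(z, s)), u(gᵢ(z, s))], gᵢ(r, s) = gᵢ(z, s). For an initial state s₀ ∈ S define the pipeline run R(z) = g_m(z, g_{m−1}(z, …, g₁(z, s₀)…)). Then for every z ∈ ℝ and every r ∈ [l(R(z)), u(R(z))], R(r) = R(z); that is, the entire pipeline output, including the final interval, is unchanged when the input parameter z is replaced by any r in the final interval. -/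
/-- Running the first `k` node update rules of a pipeline on parameter `z`,
starting from the initial state `s₀`. -/
def pipelineRun {S : Type*} (g : ℕ → ℝ → S → S) (s₀ : S) : ℕ → ℝ → S
  | 0, _ => s₀
  | k + 1, z => g k z (pipelineRun g s₀ k z)

theorem stmt_12 {S : Type*} (l u : S → ℝ) (g : ℕ → ℝ → S → S) (m : ℕ) (s₀ : S)
    (hshrink : ∀ i < m, ∀ (z : ℝ) (s : S),
      Set.Icc (l (g i z s)) (u (g i z s)) ⊆ Set.Icc (l s) (u s))
    (hinv : ∀ i < m, ∀ (z : ℝ) (s : S),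
      ∀ r ∈ Set.Icc (l (g i z s)) (u (g i z s)), g i r s = g i z s) :
    ∀ z : ℝ, ∀ r ∈ Set.Icc (l (pipelineRun g s₀ m z)) (u (pipelineRun g s₀ m z)),
      pipelineRun g s₀ m r = pipelineRun g s₀ m z := by
  induction m with
  | zero => intro z r _; rfl
  | succ k ih =>
    intro z r hr
    have hk : k < k + 1 := Nat.lt_succ_self k
    -- By shrinking, `r` also lies in the interval reached after `k` rules, so the states
    -- entering rule `k` under `r` and `z` agree; local invariance at that state concludes.
    have h := ih (fun i hi => hshrink i (hi.trans hk)) (fun i hi => hinv i (hi.trans hk))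
      z r (hshrink k hk z _ hr)
    change g k r (pipelineRun g s₀ k r) = g k z (pipelineRun g s₀ k z)
    rw [h]
    exact hinv k hk z _ r hr
end
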